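/- arXiv:2406.02971 — 3 statements merged into one kernel-verified Lean document; each statement's English description precedes it below -/
import Mathlib

section
/- For every k ≥ 2 and all n, m ≥ 1, minS_k(n + m) ≥ minS_k(n) + minS_k(m); equivalently, the minimum over words w of length n+m of maxocc(w) is at least the product of the corresponding minima for lengths n and m. -/
/-!
Split a word of length `n + m` as `w₁ ++ w₂` with `|w₁| = n`, `|w₂| = m`. Concatenating an
occurrence of `u₁` in `w₁` with one of `u₂` in `w₂` gives an occurrence of `u₁ ++ u₂` in `w₁ ++ w₂`,
and different pairs give different occurrences (`occ_mul_le`). Choosing `u₁`, `u₂` with the most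
occurrences shows that `maxocc` is supermultiplicative (`maxocc_mul_le`); the theorem follows
by taking logarithms and then the infimum over all words.
-/

open List Real

/-- `occ w u` is the number of occurrences of `u` as a subword (subsequence) of `w`,
i.e. the multiplicity of `u` among the `2^|w|` sublists of `w`. -/
def occ {α : Type*} [DecidableEq α] (w u : List α) : ℕ := w.sublists.count u

/-- `maxocc w` is the maximal number of occurrences of any subword of `w`. -/
noncomputable def maxocc {α : Type*} [DecidableEq α] (w : List α) : ℕ :=
  sSup {n : ℕ | ∃ u : List α, occ w u = n}

/-- `minS k n` is the minimal subword entropy `log₂ (maxocc w)` over words `w`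
of length `n` over the alphabet `Fin k`. -/
noncomputable def minS (k n : ℕ) : ℝ :=
  sInf {s : ℝ | ∃ w : List (Fin k), w.length = n ∧ s = Real.logb 2 (maxocc w)}

theorem count_mul_le_sum_map {β : Type*} [BEq β] [LawfulBEq β] (g : β → ℕ) (a : β) (l : List β) :
    l.count a * g a ≤ (l.map g).sum := by
  induction l with
  | nil => simp
  | cons b l ih =>
    rw [List.count_cons, List.map_cons, List.sum_cons]
    by_cases h : b = a
    · subst h
      simp only [beq_self_eq_true, if_true, add_mul, one_mul]
      omega
    · simp only [beq_iff_eq, h, if_false, add_zero]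
      omega

theorem occ_mul_le {α : Type*} [DecidableEq α] (w₁ w₂ u₁ u₂ : List α) :
    occ w₁ u₁ * occ w₂ u₂ ≤ occ (w₁ ++ w₂) (u₁ ++ u₂) := by
  unfold occ
  rw [List.sublists_append]
  change _ ≤ List.count _ (List.flatMap _ _)
  rw [List.count_flatMap]
  refine le_trans ?_ (count_mul_le_sum_map _ u₂ _)
  rw [mul_comm]
  refine Nat.mul_le_mul_left _ ?_
  exact (List.count_map_of_injective w₁.sublists (· ++ u₂)
    (List.append_left_injective u₂) u₁).ge

theorem bddAbove_occ {α : Type*} [DecidableEq α] (w : List α) :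
    BddAbove {n : ℕ | ∃ u : List α, occ w u = n} :=
  ⟨w.sublists.length, by rintro _ ⟨u, rfl⟩; exact List.count_le_length⟩

theorem occ_le_maxocc {α : Type*} [DecidableEq α] (w u : List α) : occ w u ≤ maxocc w :=
  le_csSup (bddAbove_occ w) ⟨u, rfl⟩

theorem exists_occ_eq_maxocc {α : Type*} [DecidableEq α] (w : List α) :
    ∃ u, occ w u = maxocc w :=
  Nat.sSup_mem (s := {n : ℕ | ∃ u : List α, occ w u = n}) ⟨_, [], rfl⟩ (bddAbove_occ w)

theorem maxocc_pos {α : Type*} [DecidableEq α] (w : List α) : 0 < maxocc w :=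
  lt_of_lt_of_le (List.count_pos_iff.2 (List.mem_sublists.2 (List.Sublist.refl w)))
    (occ_le_maxocc w w)

theorem maxocc_mul_le {α : Type*} [DecidableEq α] (w₁ w₂ : List α) :
    maxocc w₁ * maxocc w₂ ≤ maxocc (w₁ ++ w₂) := by
  obtain ⟨u₁, h₁⟩ := exists_occ_eq_maxocc w₁
  obtain ⟨u₂, h₂⟩ := exists_occ_eq_maxocc w₂
  rw [← h₁, ← h₂]
  exact (occ_mul_le w₁ w₂ u₁ u₂).trans (occ_le_maxocc _ _)

theorem minS_le {k : ℕ} (w : List (Fin k)) : minS k w.length ≤ Real.logb 2 (maxocc w) := by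
  refine csInf_le ⟨0, ?_⟩ ⟨w, rfl, rfl⟩
  rintro _ ⟨v, -, rfl⟩
  exact Real.logb_nonneg one_lt_two (by exact_mod_cast maxocc_pos v)

theorem stmt_5 (k : ℕ) (hk : 2 ≤ k) (n m : ℕ) (hn : 1 ≤ n) (hm : 1 ≤ m) :
    minS k (n + m) ≥ minS k n + minS k m := by
  refine le_csInf ⟨_, List.replicate (n + m) ⟨0, by omega⟩, List.length_replicate, rfl⟩ ?_
  rintro _ ⟨w, hw, rfl⟩
  have h₁ := minS_le (w.take n)
  have h₂ := minS_le (w.drop n)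
  have hlen₁ : (w.take n).length = n := by rw [List.length_take]; omega
  have hlen₂ : (w.drop n).length = m := by rw [List.length_drop]; omega
  rw [hlen₁] at h₁
  rw [hlen₂] at h₂
  have hmul := maxocc_mul_le (w.take n) (w.drop n)
  rw [List.take_append_drop] at hmul
  have p₁ : (0 : ℝ) < maxocc (w.take n) := by exact_mod_cast maxocc_pos _
  have p₂ : (0 : ℝ) < maxocc (w.drop n) := by exact_mod_cast maxocc_pos _
  refine (add_le_add h₁ h₂).trans ?_
  rw [← Real.logb_mul p₁.ne' p₂.ne']
  exact Real.logb_le_logb_of_le one_lt_two (mul_pos p₁ p₂) (by exact_mod_cast hmul)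
end

section
/- There exists a real constant c such that for all n ≥ 1, minS_2(n) ≤ (1/2)·log₂(1 + √2) · n − (1/2)·log₂ n + c. -/
/-!
The word `w = 0011 0011 ⋯` attains the bound. Split it into `N` blocks `00`, `11`, `00`, … and, for
a fixed subword `u`, let `G_u` be the generating function in `X` of the number of occurrences of `u`
in the word with `N` blocks, the first block carrying the first letter of `u`. An occurrence uses 0,
1 or 2 letters of the first block. With `t = 2X / (1 - X²)` (`step`) this gives

* `G_{av} = t G_v` if `v` does not start with `a`,
* `G_{aav} = t X G_{av} + (1/2) t G_v` if `v` does not start with `a`,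
* `G_{aav} = t X G_{av} + (1/2) t X G_v` if `v` starts with `a`.

At `X = y = √2 - 1` one has `t = 1`, so every right-hand side has total weight at most `1`, and each
factor `X` comes with a factor `t`. By induction on `u` (`dominated_occSeries`) everything reduces to
the coefficients of `t ^ K X ^ I / (1 - X)` with `I ≤ K`, which are `2 ^ K C(M, K)` for
`M = ⌊(N - I + K) / 2⌋`, so that `M` is at least about `N / 2`. Since `2y + y² = 1`, after
multiplication by `y ^ (2M - K)` this is a point probability of a binomial law of size `M`, hence
`O(1 / √M) = O(1 / √N)` (`binomial_point_le`). Therefore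
`maxocc w = O((1 + √2) ^ N / √N)` with `N = n / 2` up to rounding; for odd `n` the first
letter is dropped from the word with `(n + 1) / 2` blocks (`exists_word`).
-/

open List Real

/-! ### Point probabilities of binomial laws -/

/-- Equivalently `C(j, i) / 2 ^ j ≤ 1 / √(j + 1)`: for the central coefficient this follows by
induction from the ratio of consecutive central binomial coefficients. -/
theorem choose_sq_le (j i : ℕ) : (j.choose i) ^ 2 * (j + 1) ≤ 4 ^ j := by
  have key : ∀ n : ℕ, n.centralBinom ^ 2 * (2 * n + 1) ≤ 16 ^ n := by
    intro n
    induction n with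
    | zero => simp
    | succ n ih =>
      have h := Nat.succ_mul_centralBinom_succ n
      have h1 : 0 < (n + 1) ^ 2 := by positivity
      refine Nat.le_of_mul_le_mul_left ?_ h1
      calc (n + 1) ^ 2 * ((n + 1).centralBinom ^ 2 * (2 * (n + 1) + 1))
          = ((n + 1) * (n + 1).centralBinom) ^ 2 * (2 * n + 3) := by ring
        _ = (n.centralBinom ^ 2 * (2 * n + 1)) * (4 * (2 * n + 1) * (2 * n + 3)) := by
            rw [h]; ring
        _ ≤ 16 ^ n * (16 * (n + 1) ^ 2) := Nat.mul_le_mul ih (by nlinarith)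
        _ = (n + 1) ^ 2 * 16 ^ (n + 1) := by ring
  have hm := Nat.choose_le_middle i j
  refine le_trans (Nat.mul_le_mul_right _ (Nat.pow_le_pow_left hm 2)) ?_
  obtain ⟨n, rfl | rfl⟩ := Nat.even_or_odd' j
  · have h := key n
    rw [Nat.centralBinom] at h
    rw [Nat.mul_div_cancel_left _ (by norm_num), pow_mul]
    exact h
  · have h := key (n + 1)
    have h2 : (n + 1).centralBinom = 2 * (2 * n + 1).choose n := by
      rw [Nat.centralBinom, show 2 * (n + 1) = 2 * n + 1 + 1 by ring, Nat.choose_succ_succ,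
        Nat.choose_symm_half]
      ring
    rw [h2] at h
    rw [show (2 * n + 1) / 2 = n by omega, pow_succ 4, pow_mul 4]
    norm_num
    have h3 : (16 : ℕ) ^ (n + 1) = 16 * 16 ^ n := by ring
    nlinarith [sq_nonneg ((2 * n + 1).choose n)]

theorem choose_le_div_sqrt (j i : ℕ) : (j.choose i : ℝ) ≤ 2 ^ j / √(j + 1) := by
  have h : ((j.choose i : ℝ)) ^ 2 * (j + 1) ≤ 4 ^ j := by exact_mod_cast choose_sq_le j i
  rw [le_div_iff₀ (by positivity)]
  refine le_of_sq_le_sq ?_ (by positivity) 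
  rw [mul_pow, Real.sq_sqrt (by positivity), ← pow_mul, mul_comm j 2, pow_mul]
  norm_num; exact h

open Polynomial in
/-- Both sides are the coefficient of `X ^ k` in `(p X + q) ^ M = (q (X + 1) + (p - q) X) ^ M`.
Probabilistically, for `p + q = 1`, a coin of bias `p` is a fair coin with probability `2q` and
constant otherwise. -/
theorem binomial_coeff_expand (p q : ℝ) (M k : ℕ) :
    (M.choose k : ℝ) * p ^ k * q ^ (M - k) =
      ∑ j ∈ Finset.range (M + 1), (M.choose j : ℝ) * q ^ j * (p - q) ^ (M - j) *
        (if M - j ≤ k then (j.choose (k - (M - j)) : ℝ) else 0) := by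
  have h : (C p * X + C q) ^ M = (C q * (X + 1) + C (p - q) * X) ^ M := by
    congr 1
    simp only [C_sub]; ring
  have h2 := congrArg (fun P => Polynomial.coeff P k) h
  rw [add_pow, add_pow] at h2
  simp only [Polynomial.finsetSum_coeff] at h2
  have h3 : ∀ m, Polynomial.coeff ((C p * X) ^ m * C q ^ (M - m) * (M.choose m : ℝ[X])) k =
      if m = k then (M.choose m : ℝ) * p ^ m * q ^ (M - m) else 0 := by
    intro m
    have : (C p * X) ^ m * C q ^ (M - m) * (M.choose m : ℝ[X]) =
        C ((M.choose m : ℝ) * p ^ m * q ^ (M - m)) * X ^ m := by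
      simp only [C_mul, C_pow, mul_pow, map_natCast]; ring
    rw [this, coeff_C_mul, coeff_X_pow]
    simp only [eq_comm, mul_ite, mul_one, mul_zero]
  have h4 : ∀ j, Polynomial.coeff
      ((C q * (X + 1)) ^ j * (C (p - q) * X) ^ (M - j) * (M.choose j : ℝ[X])) k =
      (M.choose j : ℝ) * q ^ j * (p - q) ^ (M - j) *
        (if M - j ≤ k then (j.choose (k - (M - j)) : ℝ) else 0) := by
    intro j
    have : (C q * (X + 1)) ^ j * (C (p - q) * X) ^ (M - j) * (M.choose j : ℝ[X]) =
        C ((M.choose j : ℝ) * q ^ j * (p - q) ^ (M - j)) * (X ^ (M - j) * (X + 1) ^ j) := by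
      simp only [C_mul, C_pow, mul_pow, map_natCast]; ring
    rw [this, coeff_C_mul, coeff_X_pow_mul']
    simp only [coeff_X_add_one_pow]
  simp only [h3, h4] at h2
  rw [← h2, Finset.sum_ite_eq']
  split_ifs with hk
  · rfl
  · rw [Nat.choose_eq_zero_of_lt (by simpa using hk)]; simp

/-- The point probabilities of a binomial law of size `M` are `O(1 / √M)`. With
`J ~ Bin(M, 2q)` the number of fair coins in the mixture, the probability is at most
`E[1 / √(J + 1)]`, which is estimated through `E[1 / (J + 1)] ≤ 1 / (2q (M + 1))`. -/
theorem binomial_point_le (p q : ℝ) (hq : 0 < q) (hqp : q ≤ p) (hpq : p + q = 1) (M k : ℕ) :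
    (M.choose k : ℝ) * p ^ k * q ^ (M - k) ≤ (1 / (2 * q) + 1) / √(M + 1) := by
  rw [binomial_coeff_expand]
  set a := √((M : ℝ) + 1) with ha
  have ha0 : 0 < a := by positivity
  have ha2 : a ^ 2 = M + 1 := Real.sq_sqrt (by positivity)
  have hr : 0 ≤ p - q := by linarith
  have term : ∀ j ∈ Finset.range (M + 1), (M.choose j : ℝ) * q ^ j * (p - q) ^ (M - j) *
        (if M - j ≤ k then (j.choose (k - (M - j)) : ℝ) else 0) ≤
      (M.choose j : ℝ) * (2 * q) ^ j * (p - q) ^ (M - j) * (1 / a) +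
      ((M + 1).choose (j + 1) : ℝ) * (2 * q) ^ (j + 1) * (p - q) ^ (M - j) * (1 / (2 * q * a)) := by
    intro j _
    have h1 : (if M - j ≤ k then (j.choose (k - (M - j)) : ℝ) else 0) ≤ 2 ^ j / √(j + 1) := by
      split_ifs
      · exact choose_le_div_sqrt _ _
      · positivity
    -- AM-GM trades `1 / √(j + 1)` for `1 / (j + 1)`, whose binomial average is computable.
    have h2 : 1 / √((j : ℝ) + 1) ≤ 1 / a + a / (j + 1) := by
      set b := √((j : ℝ) + 1) with hb
      have hb0 : 0 < b := by positivity
      have hb2 : b ^ 2 = j + 1 := Real.sq_sqrt (by positivity)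
      rw [← hb2, div_add_div _ _ ha0.ne' (by positivity), div_le_div_iff₀ hb0 (by positivity)]
      have : 0 ≤ b * ((a - b) ^ 2 + a * b) := by positivity
      nlinarith
    have h3 : ((M + 1).choose (j + 1) : ℝ) = (M + 1) * M.choose j / (j + 1) := by
      rw [eq_div_iff (by positivity)]
      exact_mod_cast (Nat.add_one_mul_choose_eq M j).symm
    have h4 : 0 ≤ (M.choose j : ℝ) * q ^ j * (p - q) ^ (M - j) := by positivity
    calc _ ≤ (M.choose j : ℝ) * q ^ j * (p - q) ^ (M - j) * (2 ^ j * (1 / a + a / (j + 1))) := by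
          refine mul_le_mul_of_nonneg_left (h1.trans ?_) h4
          rw [div_eq_mul_one_div]
          exact mul_le_mul_of_nonneg_left h2 (by positivity)
      _ = _ := by
          rw [h3, ← ha2, mul_pow, mul_pow]
          field_simp
          ring
  refine (Finset.sum_le_sum term).trans ?_
  rw [Finset.sum_add_distrib, ← Finset.sum_mul, ← Finset.sum_mul]
  have s1 : ∑ j ∈ Finset.range (M + 1), (M.choose j : ℝ) * (2 * q) ^ j * (p - q) ^ (M - j) = 1 := by
    have := add_pow (2 * q) (p - q) M
    rw [show 2 * q + (p - q) = 1 by linarith, one_pow] at this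
    rw [this]
    exact Finset.sum_congr rfl fun _ _ => by ring
  have s2 : ∑ j ∈ Finset.range (M + 1),
      ((M + 1).choose (j + 1) : ℝ) * (2 * q) ^ (j + 1) * (p - q) ^ (M - j) ≤ 1 := by
    have := add_pow (2 * q) (p - q) (M + 1)
    rw [show 2 * q + (p - q) = 1 by linarith, one_pow, Finset.sum_range_succ'] at this
    have h5 : 0 ≤ (p - q) ^ (M + 1) := by positivity
    simp only [Nat.add_sub_add_right] at this
    calc _ = ∑ j ∈ Finset.range (M + 1),
        (2 * q) ^ (j + 1) * (p - q) ^ (M - j) * ((M + 1).choose (j + 1) : ℝ) :=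
          Finset.sum_congr rfl fun _ _ => by ring
      _ ≤ 1 := by simp at this; linarith
  rw [s1]
  calc _ ≤ 1 * (1 / a) + 1 * (1 / (2 * q * a)) := by gcongr
    _ = _ := by field_simp; ring

/-! ### Occurrences in block words -/

section

open PowerSeries

/-- The word `a a b b a a ⋯` made of `N` blocks of two equal letters. -/
def blk (a b : Fin 2) : ℕ → List (Fin 2)
  | 0 => []
  | N + 1 => a :: a :: blk b a N

theorem length_blk (a b : Fin 2) (N : ℕ) : (blk a b N).length = 2 * N := by
  induction N generalizing a b with
  | zero => rfl
  | succ N ih => simp [blk, ih]; ring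

theorem occ_nil_right (w : List (Fin 2)) : occ w [] = 1 := by
  induction w with
  | nil => simp [occ]
  | cons a w ih =>
    rw [occ, (List.sublists_cons_perm_append a w).count_eq, List.count_append]
    have : List.count [] (List.map (List.cons a) w.sublists) = 0 := by
      rw [List.count_eq_zero]; simp
    rw [this]; exact ih

theorem occ_nil_cons (a : Fin 2) (u : List (Fin 2)) : occ [] (a :: u) = 0 := by
  simp [occ]

theorem occ_cons_same (a : Fin 2) (w u : List (Fin 2)) :
    occ (a :: w) (a :: u) = occ w (a :: u) + occ w u := by
  simp only [occ]
  rw [(List.sublists_cons_perm_append a w).count_eq, List.count_append,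
    List.count_map_of_injective _ _ List.cons_injective]

theorem occ_cons_ne {a b : Fin 2} (hab : a ≠ b) (w u : List (Fin 2)) :
    occ (a :: w) (b :: u) = occ w (b :: u) := by
  simp only [occ]
  rw [(List.sublists_cons_perm_append a w).count_eq, List.count_append]
  have : List.count (b :: u) (List.map (List.cons a) w.sublists) = 0 := by
    rw [List.count_eq_zero]; simp [hab]
  rw [this, add_zero]

theorem occ_le_cons (a : Fin 2) (w u : List (Fin 2)) : occ w u ≤ occ (a :: w) u := by
  simp only [occ]
  rw [(List.sublists_cons_perm_append a w).count_eq, List.count_append]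
  exact Nat.le_add_right _ _

/-- The generating function `∑ N, occ (blk a b N) u * X ^ N`, indexed by the number of blocks. -/
noncomputable def occSeries (a b : Fin 2) (u : List (Fin 2)) : PowerSeries ℝ :=
  PowerSeries.mk fun N => (occ (blk a b N) u : ℝ)

theorem occSeries_nil (a b : Fin 2) : occSeries a b [] = PowerSeries.mk 1 := by
  ext N; simp [occSeries, occ_nil_right]

/-- If `u` starts with the other letter, the first block is of no use. -/
theorem occSeries_skip {a b : Fin 2} (hab : a ≠ b) (v : List (Fin 2)) :
    occSeries b a (a :: v) = X * occSeries a b (a :: v) := by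
  ext N
  cases N with
  | zero => simp [occSeries, blk, occ_nil_cons]
  | succ N => simp [occSeries, coeff_succ_X_mul, blk, occ_cons_ne hab.symm]

/-- The three `occSeries` recursions split by the number (0, 1 or 2) of letters of the first block
that an occurrence uses. -/
theorem occSeries_single (a b : Fin 2) :
    occSeries a b [a] = X * (occSeries b a [a] + 2 * occSeries b a []) := by
  ext N
  cases N with
  | zero => simp [occSeries, blk, occ_nil_cons]
  | succ N =>
    simp [occSeries, coeff_succ_X_mul, blk, occ_cons_same, occ_nil_right, two_mul]
    ring

theorem occSeries_change {a b : Fin 2} (hab : a ≠ b) (v : List (Fin 2)) :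
    occSeries a b (a :: b :: v) =
      X * (occSeries b a (a :: b :: v) + 2 * occSeries b a (b :: v)) := by
  ext N
  cases N with
  | zero => simp [occSeries, blk, occ_nil_cons]
  | succ N =>
    simp [occSeries, coeff_succ_X_mul, blk, occ_cons_same, occ_cons_ne hab, two_mul]
    ring

theorem occSeries_double (a b : Fin 2) (v : List (Fin 2)) :
    occSeries a b (a :: a :: v) =
      X * (occSeries b a (a :: a :: v) + 2 * occSeries b a (a :: v) + occSeries b a v) := by
  ext N
  cases N with
  | zero => simp [occSeries, blk, occ_nil_cons]
  | succ N =>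
    simp [occSeries, coeff_succ_X_mul, blk, occ_cons_same, two_mul]
    ring

/-! ### The transfer series -/

/-- The series `1 / (1 - X²)`. -/
noncomputable def geo : PowerSeries ℝ := (1 - X ^ 2)⁻¹

theorem geo_mul : geo * (1 - X ^ 2) = 1 := PowerSeries.inv_mul_cancel _ (by simp)

/-- The series `2X / (1 - X²)` that counts the ways of passing to the next letter in an alternating
subword. It takes the value `1` at `X = √2 - 1`. -/
noncomputable def step : PowerSeries ℝ := 2 * X * geo

theorem solve_step {f g : PowerSeries ℝ} (h : f = X ^ 2 * f + g) : f = geo * g := by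
  calc f = geo * (1 - X ^ 2) * f := by rw [geo_mul, one_mul]
    _ = geo * g := by rw [mul_assoc, sub_mul, one_mul]; congr 1; nth_rewrite 1 [h]; ring

theorem coeff_step_pow (K n : ℕ) :
    coeff n (step ^ K * PowerSeries.mk 1) = (2 : ℝ) ^ K * (((n + K) / 2).choose K : ℝ) := by
  suffices h : step ^ K * PowerSeries.mk 1 =
      PowerSeries.mk fun n => (2 : ℝ) ^ K * (((n + K) / 2).choose K : ℝ) by
    rw [h, coeff_mk]
  clear n
  induction K with
  | zero => ext n; simp
  | succ K ih =>
    rw [pow_succ', mul_assoc, ih]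
    symm
    have : ∀ g : PowerSeries ℝ, step * g = geo * (X * (2 * g)) := fun g => by rw [step]; ring
    rw [this]
    apply solve_step
    ext n
    have h2 : (2 : PowerSeries ℝ) = C 2 := (map_ofNat C 2).symm
    rw [h2]
    match n with
    | 0 => simp [Nat.choose_eq_zero_of_lt (show (K + 1) / 2 < K + 1 by omega)]
    | 1 =>
      rw [map_add, coeff_succ_X_mul, pow_two, mul_assoc, coeff_succ_X_mul]
      cases K with
      | zero => simp
      | succ K =>
        simp [Nat.choose_eq_zero_of_lt (show (K + 1) / 2 < K + 1 by omega),
          Nat.choose_eq_zero_of_lt (show (1 + (K + 1 + 1)) / 2 < K + 1 + 1 by omega)]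
    | n + 2 =>
      rw [map_add, coeff_succ_X_mul, pow_two, mul_assoc, coeff_succ_X_mul, coeff_succ_X_mul]
      simp only [coeff_mk, coeff_C_mul]
      rw [show (n + 2 + (K + 1)) / 2 = (n + K + 1) / 2 + 1 by omega, Nat.choose_succ_succ,
        show (n + (K + 1)) / 2 = (n + K + 1) / 2 by omega,
        show (n + 1 + K) / 2 = (n + K + 1) / 2 by omega]
      push_cast
      ring

/-! ### Domination by the envelope -/

/-- A constant multiple of `(1 + √2) ^ N / √(N + 1)`, the bound to be proved for `N` blocks. -/
noncomputable def envelope (N : ℕ) : ℝ :=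
  2 * (1 / (2 * (√2 - 1) ^ 2) + 1) * ((1 + √2) ^ N / √(N + 1))

theorem sqrt_two_bounds : 1.41 < √2 ∧ √2 < 1.42 :=
  ⟨Real.lt_sqrt_of_sq_lt (by norm_num), (Real.sqrt_lt' (by norm_num)).2 (by norm_num)⟩

theorem envelope_nonneg (N : ℕ) : 0 ≤ envelope N := by
  unfold envelope; positivity

theorem envelope_le_succ (N : ℕ) : envelope N ≤ envelope (N + 1) := by
  unfold envelope
  refine mul_le_mul_of_nonneg_left ?_ (by positivity)
  rw [div_le_div_iff₀ (by positivity) (by positivity), pow_succ, mul_assoc]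
  refine mul_le_mul_of_nonneg_left ?_ (by positivity)
  calc √(((N + 1 : ℕ) : ℝ) + 1) ≤ 2 * √((N : ℝ) + 1) := by
        refine Real.sqrt_le_iff.2 ⟨by positivity, ?_⟩
        rw [mul_pow, Real.sq_sqrt (by positivity)]
        push_cast
        linarith [(Nat.cast_nonneg N : (0 : ℝ) ≤ N)]
    _ ≤ (1 + √2) * √((N : ℝ) + 1) :=
        mul_le_mul_of_nonneg_right (by linarith [sqrt_two_bounds.1]) (Real.sqrt_nonneg _)

/-- The bound for `u = []`. With `y = √2 - 1` and `M = ⌊(n + K) / 2⌋`, the quantity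
`2 ^ K * C(M, K) * y ^ (2M - K)` is a point probability of the binomial law with parameters
`2y + y² = 1`; the condition `I ≤ K` ensures that `M` is at least about `N / 2`. -/
theorem base_bound {K I : ℕ} (hIK : I ≤ K) (N : ℕ) :
    coeff N (step ^ K * X ^ I * PowerSeries.mk 1) ≤ (√2 - 1) ^ I * envelope N := by
  obtain ⟨hl, hu⟩ := sqrt_two_bounds
  have hs : √2 ^ 2 = 2 := Real.sq_sqrt (by norm_num)
  set y : ℝ := √2 - 1 with hy
  have hy0 : 0 < y := by linarith
  have hy1 : y ≤ 1 := by linarith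
  have hyl : y * (1 + √2) = 1 := by rw [hy]; nlinarith
  rw [mul_comm (step ^ K), mul_assoc, coeff_X_pow_mul']
  split_ifs with hIN
  swap
  · have := envelope_nonneg N; positivity
  obtain ⟨n, rfl⟩ := Nat.exists_eq_add_of_le hIN
  rw [Nat.add_sub_cancel_left, coeff_step_pow]
  set M := (n + K) / 2 with hM
  by_cases hKM : M < K
  · rw [Nat.choose_eq_zero_of_lt hKM]
    have := envelope_nonneg (I + n)
    simp only [Nat.cast_zero, mul_zero]; positivity
  push Not at hKM
  have hb := binomial_point_le (2 * y) (y ^ 2) (by positivity) (by nlinarith) (by nlinarith) M K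
  have hexp : K + 2 * (M - K) ≤ n := by omega
  have h1 : (2 : ℝ) ^ K * (M.choose K : ℝ) * y ^ n ≤ (M.choose K : ℝ) * (2 * y) ^ K * (y ^ 2) ^ (M - K) := by
    calc (2 : ℝ) ^ K * (M.choose K : ℝ) * y ^ n
        ≤ (2 : ℝ) ^ K * (M.choose K : ℝ) * y ^ (K + 2 * (M - K)) :=
          mul_le_mul_of_nonneg_left (pow_le_pow_of_le_one hy0.le hy1 hexp) (by positivity)
      _ = _ := by rw [pow_add, pow_mul, mul_pow]; ring
  have h2 : 1 / √((M : ℝ) + 1) ≤ 2 / √(((I + n : ℕ) : ℝ) + 1) := by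
    rw [div_le_div_iff₀ (by positivity) (by positivity), one_mul]
    refine Real.sqrt_le_iff.2 ⟨by positivity, ?_⟩
    rw [mul_pow, Real.sq_sqrt (by positivity)]
    have : I + n + 1 ≤ 4 * (M + 1) := by omega
    have : ((I + n : ℕ) : ℝ) + 1 ≤ 4 * (M + 1) := by exact_mod_cast this
    linarith
  have h3 : (2 : ℝ) ^ K * (M.choose K : ℝ) * y ^ n ≤
      (1 / (2 * y ^ 2) + 1) * (2 / √(((I + n : ℕ) : ℝ) + 1)) := by
    refine (h1.trans hb).trans ?_
    rw [div_eq_mul_one_div]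
    exact mul_le_mul_of_nonneg_left h2 (by positivity)
  have h4 : y ^ n * (1 + √2) ^ n = 1 := by rw [← mul_pow, hyl, one_pow]
  have h5 : y ^ I * (1 + √2) ^ I = 1 := by rw [← mul_pow, hyl, one_pow]
  calc (2 : ℝ) ^ K * (M.choose K : ℝ)
      = (2 : ℝ) ^ K * (M.choose K : ℝ) * y ^ n * (1 + √2) ^ n := by rw [mul_assoc _ (y ^ n), h4, mul_one]
    _ ≤ (1 / (2 * y ^ 2) + 1) * (2 / √(((I + n : ℕ) : ℝ) + 1)) * (1 + √2) ^ n := by gcongr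
    _ = (y ^ I * (1 + √2) ^ I) * ((1 / (2 * y ^ 2) + 1) * (2 / √(((I + n : ℕ) : ℝ) + 1)) * (1 + √2) ^ n) := by
        rw [h5, one_mul]
    _ = y ^ I * envelope (I + n) := by
        rw [envelope, ← hy, pow_add]; ring

/-- The coefficients of `f`, even after multiplication by `step ^ K * X ^ I` with `I ≤ K`, are
bounded by the envelope, with a gain of `√2 - 1` for each factor `X`. -/
def Dominated (f : PowerSeries ℝ) : Prop :=
  ∀ K I N : ℕ, I ≤ K → coeff N (step ^ K * X ^ I * f) ≤ (√2 - 1) ^ I * envelope N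

theorem Dominated.step_mul {f : PowerSeries ℝ} (hf : Dominated f) : Dominated (step * f) := by
  intro K I N h
  have := hf (K + 1) I N (by omega)
  rwa [pow_succ, show step ^ K * step * X ^ I * f = step ^ K * X ^ I * (step * f) by ring] at this

/-- Here the total weight is `(√2 - 1) + 1 / 2 < 1`. -/
theorem Dominated.combine {f g : PowerSeries ℝ} (hf : Dominated f) (hg : Dominated g) :
    Dominated (step * X * f + C (1 / 2) * (step * g)) := by
  intro K I N h
  have h1 := hf (K + 1) (I + 1) N (by omega)
  have h2 := hg (K + 1) I N (by omega)
  rw [show step ^ K * X ^ I * (step * X * f + C (1 / 2) * (step * g)) =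
    step ^ (K + 1) * X ^ (I + 1) * f + C (1 / 2) * (step ^ (K + 1) * X ^ I * g) by ring,
    map_add, coeff_C_mul]
  have h3 : 0 ≤ (√2 - 1) ^ I * envelope N :=
    mul_nonneg (pow_nonneg (by linarith [sqrt_two_bounds.1]) _) (envelope_nonneg N)
  rw [pow_succ (√2 - 1)] at h1
  nlinarith [sqrt_two_bounds.2]

/-- Here the total weight is `(3 / 2) (√2 - 1) < 1`. -/
theorem Dominated.combine_shift {f g : PowerSeries ℝ} (hf : Dominated f) (hg : Dominated g) :
    Dominated (step * X * f + C (1 / 2) * (step * (X * g))) := by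
  intro K I N h
  have h1 := hf (K + 1) (I + 1) N (by omega)
  have h2 := hg (K + 1) (I + 1) N (by omega)
  rw [show step ^ K * X ^ I * (step * X * f + C (1 / 2) * (step * (X * g))) =
    step ^ (K + 1) * X ^ (I + 1) * f + C (1 / 2) * (step ^ (K + 1) * X ^ (I + 1) * g) by ring,
    map_add, coeff_C_mul]
  have h3 : 0 ≤ (√2 - 1) ^ I * envelope N :=
    mul_nonneg (pow_nonneg (by linarith [sqrt_two_bounds.1]) _) (envelope_nonneg N)
  rw [pow_succ (√2 - 1)] at h1 h2
  nlinarith [sqrt_two_bounds.2]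

theorem half_step (g : PowerSeries ℝ) : C (1 / 2) * (step * g) = geo * (X * g) := by
  have h2 : C (1 / 2 : ℝ) * (2 : PowerSeries ℝ) = 1 := by
    rw [← map_ofNat C 2, ← map_mul]; norm_num
  rw [step]
  linear_combination (X * geo * g) * h2

theorem fin2_cases {a b : Fin 2} (hab : a ≠ b) (c : Fin 2) : c = a ∨ c = b := by
  revert a b c; decide

/-- Domination for a word `u` whose first letter, if any, is that of the first block. If the first
run of `u` has length one, its removal amounts to a division by `step`; otherwise removing one or
two letters expresses the series through the combinations handled in `Dominated.combine` and
`Dominated.combine_shift`. -/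
theorem dominated_occSeries (u : List (Fin 2)) :
    ∀ a b : Fin 2, a ≠ b → (∀ c ∈ u.head?, c = a) → Dominated (occSeries a b u) := by
  induction hn : u.length using Nat.strong_induction_on generalizing u with
  | _ n ih =>
    subst hn
    intro a b hab hu
    match u, hu, ih with
    | [], _, _ =>
      intro K I N h
      rw [occSeries_nil]
      exact base_bound h N
    | [c], hu, ih =>
      obtain rfl : c = a := hu c (by simp)
      have h : occSeries c b [c] = step * occSeries b c [] := by
        rw [step, show 2 * X * geo * occSeries b c [] = geo * (2 * X * occSeries b c []) by ring]
        apply solve_step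
        nth_rewrite 1 [occSeries_single]
        rw [occSeries_skip hab]; ring
      rw [h]
      exact (ih 0 (by simp) [] rfl b c hab.symm (by simp)).step_mul
    | c :: d :: v, hu, ih =>
      obtain rfl : c = a := hu c (by simp)
      obtain rfl | rfl := fin2_cases hab d
      · have h : occSeries d b (d :: d :: v) =
            step * X * occSeries d b (d :: v) + C (1 / 2) * (step * occSeries b d v) := by
          rw [half_step, step, show 2 * X * geo * X * occSeries d b (d :: v) +
            geo * (X * occSeries b d v) =
            geo * (2 * X * X * occSeries d b (d :: v) + X * occSeries b d v) by ring]
          apply solve_step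
          nth_rewrite 1 [occSeries_double]
          rw [occSeries_skip hab, occSeries_skip hab]; ring
        rw [h]
        have h1 := ih (v.length + 1) (by simp) (d :: v) (by simp) d b hab (by simp)
        match v, h1, ih with
        | [], h1, ih => exact h1.combine (ih 0 (by simp) [] rfl b d hab.symm (by simp))
        | e :: v, h1, ih =>
          obtain rfl | rfl := fin2_cases hab e
          · rw [occSeries_skip hab]
            exact h1.combine_shift (ih (v.length + 1) (by simp) (e :: v) (by simp) e b hab (by simp))
          · exact h1.combine
              (ih (v.length + 1) (by simp) (e :: v) (by simp) e d hab.symm (by simp))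
      · have h : occSeries c d (c :: d :: v) = step * occSeries d c (d :: v) := by
          rw [step, show 2 * X * geo * occSeries d c (d :: v) =
            geo * (2 * X * occSeries d c (d :: v)) by ring]
          apply solve_step
          nth_rewrite 1 [occSeries_change hab]
          rw [occSeries_skip hab]; ring
        rw [h]
        exact (ih (v.length + 1) (by simp) (d :: v) (by simp) d c hab.symm (by simp)).step_mul

theorem occ_blk_le (N : ℕ) (u : List (Fin 2)) : (occ (blk 0 1 N) u : ℝ) ≤ envelope N := by
  have h01 : (0 : Fin 2) ≠ 1 := by decide
  have of_dom : ∀ a b, Dominated (occSeries a b u) → (occ (blk a b N) u : ℝ) ≤ envelope N := by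
    intro a b h
    simpa [occSeries] using h 0 0 N le_rfl
  match u, of_dom with
  | [], of_dom => exact of_dom 0 1 (dominated_occSeries [] 0 1 h01 (by simp))
  | c :: v, of_dom =>
    obtain rfl | rfl := fin2_cases h01 c
    · exact of_dom 0 1 (dominated_occSeries _ 0 1 h01 (by simp))
    · cases N with
      | zero => simpa [blk, occ_nil_cons] using envelope_nonneg 0
      | succ N =>
        have h := dominated_occSeries (1 :: v) 1 0 h01.symm (by simp) 0 0 N le_rfl
        simp only [pow_zero, one_mul, occSeries, coeff_mk] at h
        rw [blk, occ_cons_ne h01, occ_cons_ne h01]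
        exact h.trans (envelope_le_succ N)

theorem minS_le_s10 (n : ℕ) (B : ℝ) (w : List (Fin 2)) (hw : w.length = n)
    (hB : ∀ u, (occ w u : ℝ) ≤ B) : minS 2 n ≤ Real.logb 2 B := by
  have hbdd : BddAbove {m : ℕ | ∃ u : List (Fin 2), occ w u = m} := by
    refine ⟨⌊B⌋₊, ?_⟩
    rintro m ⟨u, rfl⟩
    exact Nat.le_floor (hB u)
  have h1 : 1 ≤ maxocc w := le_csSup hbdd ⟨[], occ_nil_right w⟩
  have h2 : (maxocc w : ℝ) ≤ B := by
    obtain ⟨u, hu⟩ := Nat.sSup_mem (s := {m : ℕ | ∃ u : List (Fin 2), occ w u = m})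
      ⟨occ w [], [], rfl⟩ hbdd
    rw [maxocc, ← hu]
    exact hB u
  have h1' : (1 : ℝ) ≤ maxocc w := by exact_mod_cast h1
  have h3 : Real.logb 2 (maxocc w) ≤ Real.logb 2 B :=
    Real.logb_le_logb_of_le (by norm_num) (by linarith) h2
  refine le_trans ?_ h3
  unfold minS
  refine csInf_le ⟨0, ?_⟩ ⟨w, hw, rfl⟩
  -- Entropies are bounded below by `0`, also for the value `logb 2 0 = 0`.
  rintro s ⟨w, -, rfl⟩
  rcases Nat.eq_zero_or_pos (maxocc w) with h | h
  · simp [h]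
  · exact Real.logb_nonneg (by norm_num) (by exact_mod_cast h)

theorem exists_word (n : ℕ) : ∃ w : List (Fin 2), w.length = n ∧
    ∀ u, (occ w u : ℝ) ≤ envelope ((n + 1) / 2) := by
  obtain ⟨N, rfl | rfl⟩ := Nat.even_or_odd' n
  · refine ⟨blk 0 1 N, length_blk _ _ _, fun u => ?_⟩
    rw [show (2 * N + 1) / 2 = N by omega]
    exact occ_blk_le N u
  · refine ⟨0 :: blk 1 0 N, by simp [length_blk], fun u => ?_⟩
    rw [show (2 * N + 1 + 1) / 2 = N + 1 by omega]
    refine le_trans ?_ (occ_blk_le (N + 1) u)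
    exact_mod_cast occ_le_cons 0 (0 :: blk 1 0 N) u

end

theorem stmt_10 :
    ∃ c : ℝ, ∀ n : ℕ, 1 ≤ n →
      minS 2 n ≤ (1 / 2) * Real.logb 2 (1 + Real.sqrt 2) * n
        - (1 / 2) * Real.logb 2 n + c := by
  set D : ℝ := 2 * (1 / (2 * (√2 - 1) ^ 2) + 1) with hD
  have hD0 : 0 < D := by positivity
  refine ⟨Real.logb 2 D + (1 / 2) * Real.logb 2 (1 + √2) + 1 / 2, fun n hn => ?_⟩
  obtain ⟨w, hw, hB⟩ := exists_word n
  refine (minS_le_s10 n _ w hw hB).trans ?_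
  set N := (n + 1) / 2 with hN
  have hl : 0 ≤ Real.logb 2 (1 + √2) :=
    Real.logb_nonneg (by norm_num) (by linarith [Real.sqrt_nonneg 2])
  have e : Real.logb 2 (envelope N) =
      Real.logb 2 D + (N * Real.logb 2 (1 + √2) - (1 / 2) * Real.logb 2 (N + 1)) := by
    rw [envelope, ← hD, Real.logb_mul hD0.ne' (by positivity),
      Real.logb_div (by positivity) (by positivity), Real.logb_pow, Real.sqrt_eq_rpow ((N : ℝ) + 1),
      Real.logb_rpow_eq_mul_logb_of_pos (by positivity)]
  have hNle : (N : ℝ) ≤ (n + 1) / 2 := by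
    have : N * 2 ≤ n + 1 := by omega
    rw [le_div_iff₀ (by norm_num)]
    exact_mod_cast this
  have hn0 : (0 : ℝ) < n := by exact_mod_cast hn
  have hlog : Real.logb 2 n ≤ 1 + Real.logb 2 (N + 1) := by
    have h1 : (n : ℝ) ≤ 2 * (N + 1) := by
      have : n ≤ 2 * (N + 1) := by omega
      exact_mod_cast this
    calc Real.logb 2 n ≤ Real.logb 2 (2 * (N + 1)) := Real.logb_le_logb_of_le (by norm_num) hn0 h1
      _ = _ := by rw [Real.logb_mul (by norm_num) (by positivity), Real.logb_self_eq_one (by norm_num)]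
  rw [e]
  have := mul_le_mul_of_nonneg_right hNle hl
  linarith
end

section
/- For all m, r ≥ 0, occ((01)^m, (01)^r) = C(m + r, 2r), where C denotes the binomial coefficient (so in particular the count is 0 when r > m). -/
/-!
Splitting occurrences according to whether they use the first letter of the text gives a
recursion for `occ` (`occ_cons_cons`). For `A(m, r) = occ((01)^m, (01)^r)` and
`B(m, r) = occ((01)^m, 1(01)^r)` it reads
`B(m+1, r) = B(m, r) + A(m, r)` and `A(m+1, r+1) = A(m, r+1) + B(m, r) + A(m, r)`.
By Pascal's rule these are the recursions satisfied by `A(m, r) = C(m+r, 2r)` and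
`B(m, r) = C(m+r, 2r+1)`, so both formulas follow by a simultaneous induction on `m`
(`occ_rep_pair`).
-/

open List Real

/-- `rep v m` is the concatenation of `m` copies of the word `v`. -/
def rep {α : Type*} (v : List α) (m : ℕ) : List α := (List.replicate m v).flatten

theorem occ_nil_nil {α : Type*} [DecidableEq α] : occ ([] : List α) [] = 1 := by
  simp [occ]

theorem occ_nil_cons_s13 {α : Type*} [DecidableEq α] (b : α) (u : List α) :
    occ [] (b :: u) = 0 := by
  simp [occ]

theorem occ_cons_nil {α : Type*} [DecidableEq α] (a : α) (w : List α) :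
    occ (a :: w) [] = occ w [] := by
  unfold occ
  rw [(List.sublists_cons_perm_append a w).count_eq, List.count_append, Nat.add_eq_left,
    List.count_eq_zero]
  simp

/-- An occurrence of `b :: u` in `a :: w` either avoids the first letter of the text, or uses it,
which requires `a = b`. -/
theorem occ_cons_cons {α : Type*} [DecidableEq α] (a b : α) (w u : List α) :
    occ (a :: w) (b :: u) = occ w (b :: u) + if a = b then occ w u else 0 := by
  unfold occ
  rw [(List.sublists_cons_perm_append a w).count_eq, List.count_append]
  congr 1
  split_ifs with h
  · subst h
    exact List.count_map_of_injective _ _ List.cons_injective _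
  · rw [List.count_eq_zero]
    simp [h]

theorem rep_zero {α : Type*} (v : List α) : rep v 0 = [] := rfl

theorem rep_pair_succ {α : Type*} (a b : α) (m : ℕ) :
    rep [a, b] (m + 1) = a :: b :: rep [a, b] m := by
  simp [rep, List.replicate_succ]

/-- The second count, of the words `1(01)^r`, is what makes the induction on `m` close. -/
theorem occ_rep_pair (m : ℕ) : ∀ r : ℕ,
    occ (rep ([0, 1] : List (Fin 2)) m) (rep [0, 1] r) = (m + r).choose (2 * r) ∧
    occ (rep ([0, 1] : List (Fin 2)) m) (1 :: rep [0, 1] r) = (m + r).choose (2 * r + 1) := by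
  induction m with
  | zero =>
    intro r
    constructor
    · cases r with
      | zero => simp [rep_zero, occ_nil_nil]
      | succ r =>
        rw [rep_zero, rep_pair_succ, occ_nil_cons_s13, Nat.choose_eq_zero_of_lt (by omega)]
    · rw [rep_zero, occ_nil_cons_s13, Nat.choose_eq_zero_of_lt (by omega)]
  | succ m ih =>
    intro r
    constructor
    · cases r with
      | zero =>
        have h := (ih 0).1
        simp only [rep_zero, Nat.mul_zero, Nat.choose_zero_right] at h ⊢
        rw [rep_pair_succ, occ_cons_nil, occ_cons_nil, h]
      | succ r =>
        have h := (ih (r + 1)).1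
        rw [rep_pair_succ] at h
        rw [rep_pair_succ, rep_pair_succ]
        simp only [occ_cons_cons, h, (ih r).1, (ih r).2]
        have e1 : m + 1 + (r + 1) = (m + r + 1) + 1 := by omega
        have e2 : 2 * (r + 1) = (2 * r + 1) + 1 := by omega
        have e3 : m + (r + 1) = m + r + 1 := by omega
        rw [e1, e2, e3, Nat.choose_succ_succ' (m + r + 1) (2 * r + 1),
          Nat.choose_succ_succ' (m + r) (2 * r)]
        simp
        omega
    · rw [rep_pair_succ]
      simp only [occ_cons_cons, (ih r).1, (ih r).2]
      have e1 : m + 1 + r = (m + r) + 1 := by omega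
      rw [e1, Nat.choose_succ_succ' (m + r) (2 * r)]
      simp
      omega

theorem stmt_13 (m r : ℕ) :
    occ (rep ([0, 1] : List (Fin 2)) m) (rep [0, 1] r) = (m + r).choose (2 * r) :=
  (occ_rep_pair m r).1
end
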